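/- arXiv:math/0405425 — 7 statements merged into one kernel-verified Lean document; each statement's English description precedes it below -/
import Mathlib

section
/- Let [(Qᵢ,𝒬ᵢ),Tᵢ,(Δᵢ,𝒟ᵢ)], i = 1,2, be two generators, let (f,g) be a transition-preserving map from T₁ to T₂, and let μ be a probability measure on (Q₁,𝒬₁). Then for all n ∈ ℕ and all B₁,…,Bₙ ∈ 𝒟₂, the finite-dimensional marginals satisfy Pₙ^{f_*(μ),T₂}(B₁×⋯×Bₙ) = Pₙ^{μ,T₁}(g⁻¹(B₁)×⋯×g⁻¹(Bₙ)), where f_*(μ) denotes the pushforward of μ under f. -/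
open MeasureTheory ProbabilityTheory
open scoped ENNReal

namespace HiddenSources

variable {Q Δ : Type*}

/-- The iterated integral appearing in the finite-dimensional marginals:
`fdmAux T n x B = ∫_{Q×B₁}⋯∫_{Q×Bₙ} T(x_{n-1}, d(xₙ,yₙ)) ⋯ T(x, d(x₁,y₁))`. -/
noncomputable def fdmAux [MeasurableSpace Q] [MeasurableSpace Δ] (T : Kernel Q (Q × Δ)) :
    (n : ℕ) → Q → (Fin n → Set Δ) → ℝ≥0∞
  | 0, _, _ => 1
  | n + 1, x, B =>
      ∫⁻ p : Q × Δ, Set.indicator (B 0) (fun _ => fdmAux T n p.1 fun i => B i.succ) p.2 ∂(T x)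

/-- The finite-dimensional marginal `Pₙ^{μ,T}(B₁ × ⋯ × Bₙ)` of the observed process of the
generator `T` with initial distribution `μ`. -/
noncomputable def fdm [MeasurableSpace Q] [MeasurableSpace Δ] (T : Kernel Q (Q × Δ))
    (μ : Measure Q) (n : ℕ) (B : Fin n → Set Δ) : ℝ≥0∞ :=
  ∫⁻ x, fdmAux T n x B ∂μ

/-- `P` is the path measure `P^{μ,T}` on `Δ^ℕ`: a probability measure whose cylinder
sets have measure given by the finite-dimensional marginals `Pₙ^{μ,T}`. -/
def IsPathMeasure [MeasurableSpace Q] [MeasurableSpace Δ] (T : Kernel Q (Q × Δ))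
    (μ : Measure Q) (P : Measure (ℕ → Δ)) : Prop :=
  IsProbabilityMeasure P ∧
    ∀ (n : ℕ) (B : Fin n → Set Δ), (∀ i, MeasurableSet (B i)) →
      P {y | ∀ i : Fin n, y i ∈ B i} = fdm T μ n B

/-- `im(G_T)`: the set of stochastic processes (identified with their path measures on
`Δ^ℕ`) generated by `T`, as the initial distribution `μ` ranges over the probability
measures on `Q`. -/
def genSet [MeasurableSpace Q] [MeasurableSpace Δ] (T : Kernel Q (Q × Δ)) :
    Set (Measure (ℕ → Δ)) :=
  {P | ∃ μ : Measure Q, IsProbabilityMeasure μ ∧ IsPathMeasure T μ P}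

/-- `(f, g)` is a transition-preserving map (morphism of generators) from `T₁` to `T₂`:
`f`, `g` are measurable and `T₂(f(x), A × B) = T₁(x, f⁻¹(A) × g⁻¹(B))` for all `x`
and measurable `A`, `B`. -/
def TransitionPreserving {Q₁ Q₂ Δ₁ Δ₂ : Type*}
    [MeasurableSpace Q₁] [MeasurableSpace Q₂] [MeasurableSpace Δ₁] [MeasurableSpace Δ₂]
    (T₁ : Kernel Q₁ (Q₁ × Δ₁)) (T₂ : Kernel Q₂ (Q₂ × Δ₂))
    (f : Q₁ → Q₂) (g : Δ₁ → Δ₂) : Prop :=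
  Measurable f ∧ Measurable g ∧
    ∀ (x : Q₁) (A : Set Q₂) (B : Set Δ₂), MeasurableSet A → MeasurableSet B →
      T₂ (f x) (A ×ˢ B) = T₁ x ((f ⁻¹' A) ×ˢ (g ⁻¹' B))

theorem integrand_measurable {Q Δ : Type*} [MeasurableSpace Q] [MeasurableSpace Δ]
    {φ : Q → ℝ≥0∞} (hφ : Measurable φ) {C : Set Δ} (hC : MeasurableSet C) :
    Measurable fun p : Q × Δ => Set.indicator C (fun _ => φ p.1) p.2 := by
  have h : (fun p : Q × Δ => Set.indicator C (fun _ => φ p.1) p.2)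
      = Set.indicator (Prod.snd ⁻¹' C) (fun p : Q × Δ => φ p.1) := by
    ext p
    simp only [Set.indicator]
    rfl
  rw [h]
  exact (hφ.comp measurable_fst).indicator (measurable_snd hC)

theorem fdmAux_measurable {Q Δ : Type*} [MeasurableSpace Q] [MeasurableSpace Δ]
    (T : Kernel Q (Q × Δ)) (n : ℕ) (B : Fin n → Set Δ) (hB : ∀ i, MeasurableSet (B i)) :
    Measurable fun x => fdmAux T n x B := by
  induction n with
  | zero => simp only [fdmAux]; exact measurable_const
  | succ n ih =>
    simp only [fdmAux]
    exact (integrand_measurable (ih _ fun i => hB i.succ) (hB 0)).lintegral_kernel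

theorem TransitionPreserving.map_eq {Q₁ Q₂ Δ₁ Δ₂ : Type*}
    [MeasurableSpace Q₁] [MeasurableSpace Q₂] [MeasurableSpace Δ₁] [MeasurableSpace Δ₂]
    {T₁ : Kernel Q₁ (Q₁ × Δ₁)} {T₂ : Kernel Q₂ (Q₂ × Δ₂)}
    [IsMarkovKernel T₁] [IsMarkovKernel T₂]
    {f : Q₁ → Q₂} {g : Δ₁ → Δ₂} (hfg : TransitionPreserving T₁ T₂ f g) (x : Q₁) :
    T₂ (f x) = (T₁ x).map (Prod.map f g) := by
  obtain ⟨hf, hg, h⟩ := hfg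
  refine Measure.ext_prod fun {A} {C} hA hC => ?_
  rw [Measure.map_apply (hf.prodMap hg) (hA.prod hC), h x A C hA hC]
  rfl

theorem fdmAux_map_eq {Q₁ Q₂ Δ₁ Δ₂ : Type*}
    [MeasurableSpace Q₁] [MeasurableSpace Q₂] [MeasurableSpace Δ₁] [MeasurableSpace Δ₂]
    {T₁ : Kernel Q₁ (Q₁ × Δ₁)} {T₂ : Kernel Q₂ (Q₂ × Δ₂)}
    [IsMarkovKernel T₁] [IsMarkovKernel T₂]
    {f : Q₁ → Q₂} {g : Δ₁ → Δ₂} (hfg : TransitionPreserving T₁ T₂ f g)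
    (n : ℕ) (x : Q₁) (B : Fin n → Set Δ₂) (hB : ∀ i, MeasurableSet (B i)) :
    fdmAux T₂ n (f x) B = fdmAux T₁ n x fun i => g ⁻¹' (B i) := by
  induction n generalizing x with
  | zero => simp only [fdmAux]
  | succ n ih =>
    simp only [fdmAux]
    rw [hfg.map_eq x, lintegral_map
      (integrand_measurable (fdmAux_measurable T₂ n _ fun i => hB i.succ) (hB 0))
      (hfg.1.prodMap hfg.2.1)]
    refine lintegral_congr fun p => ?_
    simp only [Prod.map_fst, Prod.map_snd, Set.indicator, Set.mem_preimage]
    rw [ih p.1 (fun i => B i.succ) fun i => hB i.succ]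
    rfl

/-- **Proposition 3.1.** If `(f,g)` is a transition-preserving map from `T₁` to `T₂` and
`μ` is a probability measure on `(Q₁,𝒬₁)`, then
`Pₙ^{f_*(μ),T₂}(B₁ × ⋯ × Bₙ) = Pₙ^{μ,T₁}(g⁻¹(B₁) × ⋯ × g⁻¹(Bₙ))`. -/
theorem fdm_map_eq {Q₁ Q₂ Δ₁ Δ₂ : Type*}
    [MeasurableSpace Q₁] [MeasurableSpace Q₂] [MeasurableSpace Δ₁] [MeasurableSpace Δ₂]
    (T₁ : Kernel Q₁ (Q₁ × Δ₁)) (T₂ : Kernel Q₂ (Q₂ × Δ₂))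
    [IsMarkovKernel T₁] [IsMarkovKernel T₂]
    (f : Q₁ → Q₂) (g : Δ₁ → Δ₂) (hfg : TransitionPreserving T₁ T₂ f g)
    (μ : Measure Q₁) [IsProbabilityMeasure μ]
    (n : ℕ) (B : Fin n → Set Δ₂) (hB : ∀ i, MeasurableSet (B i)) :
    fdm T₂ (μ.map f) n B = fdm T₁ μ n fun i => g ⁻¹' (B i) := by
  unfold fdm
  rw [lintegral_map (fdmAux_measurable T₂ n B hB) hfg.1]
  exact lintegral_congr fun x => fdmAux_map_eq hfg n x B hB

end HiddenSources
end

section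
/- Let [(Q,𝒬),T₁,(Δ₁,𝒟₁)] be a generator that generates a stochastic process (Yₙ)_{n∈ℕ} in (Δ₁,𝒟₁), and let g: (Δ₁,𝒟₁) → (Δ₂,𝒟₂) be a measurable map. Then T₂: Q × (𝒬⊗𝒟₂) → [0,1] defined by T₂(x, A×B) := T₁(x, A × g⁻¹(B)) is a generator with output space (Δ₂,𝒟₂), and T₂ generates the stochastic process (g∘Yₙ)_{n∈ℕ} in (Δ₂,𝒟₂). -/
open MeasureTheory ProbabilityTheory
open scoped ENNReal

namespace HiddenSources

variable {Q Δ : Type*}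

theorem measurable_fdmAux [MeasurableSpace Q] [MeasurableSpace Δ] (T : Kernel Q (Q × Δ)) :
    ∀ (n : ℕ) (B : Fin n → Set Δ), (∀ i, MeasurableSet (B i)) →
      Measurable fun x => fdmAux T n x B
  | 0, _, _ => by simp only [fdmAux]; exact measurable_const
  | n + 1, B, hB => by
      simp only [fdmAux]
      have ih := measurable_fdmAux T n (fun i => B i.succ) (fun i => hB i.succ)
      have h : Measurable fun p : Q × Δ =>
          Set.indicator (B 0) (fun _ => fdmAux T n p.1 fun i => B i.succ) p.2 :=
        (ih.comp measurable_fst).indicator (measurable_snd (hB 0))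
      exact h.lintegral_kernel

theorem fdmAux_map {Δ' : Type*} [MeasurableSpace Q] [MeasurableSpace Δ] [MeasurableSpace Δ']
    (T : Kernel Q (Q × Δ)) (g : Δ → Δ') (hg : Measurable g) :
    ∀ (n : ℕ) (x : Q) (B : Fin n → Set Δ'), (∀ i, MeasurableSet (B i)) →
      fdmAux (T.map (Prod.map id g)) n x B = fdmAux T n x fun i => g ⁻¹' B i
  | 0, _, _, _ => by simp only [fdmAux]
  | n + 1, x, B, hB => by
      have hG : Measurable (Prod.map id g : Q × Δ → Q × Δ') := measurable_id.prodMap hg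
      have h : Measurable fun p : Q × Δ' => Set.indicator (B 0)
          (fun _ => fdmAux (T.map (Prod.map id g)) n p.1 fun i => B i.succ) p.2 :=
        ((measurable_fdmAux _ n (fun i => B i.succ) (fun i => hB i.succ)).comp
          measurable_fst).indicator (measurable_snd (hB 0))
      rw [fdmAux, fdmAux, Kernel.map_apply _ hG, lintegral_map h hG]
      refine lintegral_congr fun p => ?_
      have ih := fdmAux_map T g hg n p.1 (fun i => B i.succ) (fun i => hB i.succ)
      simp only [Prod.map_fst, Prod.map_snd, id, ih]
      rfl

/-- **Corollary 3.4.** Given a generator `T₁` with output space `(Δ₁,𝒟₁)` and a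
measurable map `g : Δ₁ → Δ₂`, the kernel `T₂` with `T₂(x, A × B) := T₁(x, A × g⁻¹(B))`
is a generator with output space `(Δ₂,𝒟₂)`, and whenever `T₁` generates a process
`(Yₙ)` (from initial distribution `μ` with path measure `P`), `T₂` generates the
process `(g ∘ Yₙ)`. -/
theorem exists_output_transformed_generator {Q Δ₁ Δ₂ : Type*}
    [MeasurableSpace Q] [MeasurableSpace Δ₁] [MeasurableSpace Δ₂]
    (T₁ : Kernel Q (Q × Δ₁)) [IsMarkovKernel T₁]
    (g : Δ₁ → Δ₂) (hg : Measurable g) :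
    ∃ T₂ : Kernel Q (Q × Δ₂), IsMarkovKernel T₂ ∧
      (∀ (x : Q) (A : Set Q) (B : Set Δ₂), MeasurableSet A → MeasurableSet B →
        T₂ x (A ×ˢ B) = T₁ x (A ×ˢ (g ⁻¹' B))) ∧
      ∀ (μ : Measure Q), IsProbabilityMeasure μ → ∀ P : Measure (ℕ → Δ₁),
        IsPathMeasure T₁ μ P → IsPathMeasure T₂ μ (P.map fun y n => g (y n)) := by
  have hG : Measurable (Prod.map id g : Q × Δ₁ → Q × Δ₂) := measurable_id.prodMap hg
  refine ⟨T₁.map (Prod.map id g), Kernel.IsMarkovKernel.map _ hG, ?_, ?_⟩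
  · intro x A B hA hB
    rw [Kernel.map_apply' _ hG _ (hA.prod hB)]
    rfl
  · rintro μ _ P ⟨hP, h⟩
    have hm : Measurable fun (y : ℕ → Δ₁) (n : ℕ) => g (y n) :=
      measurable_pi_lambda _ fun n => hg.comp (measurable_pi_apply n)
    refine ⟨Measure.isProbabilityMeasure_map hm.aemeasurable, fun n B hB => ?_⟩
    have hs : MeasurableSet {y : ℕ → Δ₂ | ∀ i : Fin n, y i ∈ B i} := by
      rw [Set.setOf_forall]
      exact MeasurableSet.iInter fun i => measurable_pi_apply (i : ℕ) (hB i)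
    rw [Measure.map_apply hm hs]
    refine (h n (fun i => g ⁻¹' B i) fun i => hg (hB i)).trans ?_
    exact lintegral_congr fun x => (fdmAux_map T₁ g hg n x B hB).symm

end HiddenSources
end

section
/- Let [(Q,𝒬),T,(Δ,𝒟)] be a generator. Then there exists a smallest σ-subalgebra σ_Q(T) of 𝒬 with the property that for all C ∈ σ_Q(T)⊗𝒟, the function x ↦ T(x,C) is σ_Q(T)-measurable; namely, the intersection of the family of all σ-subalgebras 𝒜 of 𝒬 such that for all C ∈ 𝒜⊗𝒟 the function T(·,C) is 𝒜-measurable, itself has this property. -/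
open MeasureTheory ProbabilityTheory
open scoped ENNReal

namespace HiddenSources

variable {Q Δ : Type*}

/-- A σ-subalgebra `𝒜 ≤ 𝒬` such that `T(·,C)` is `𝒜`-measurable for every
`C ∈ 𝒜 ⊗ 𝒟`. -/
def IsSufficientAlgebra [mQ : MeasurableSpace Q] [mΔ : MeasurableSpace Δ]
    (T : Kernel Q (Q × Δ)) (𝒜 : MeasurableSpace Q) : Prop :=
  𝒜 ≤ mQ ∧ ∀ C : Set (Q × Δ), MeasurableSet[𝒜.prod mΔ] C → Measurable[𝒜] fun x => T x C

/-- `σ_Q(T)`: the smallest σ-subalgebra of `𝒬` such that `T(·,C)` is `σ_Q(T)`-measurable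
for all `C ∈ σ_Q(T) ⊗ 𝒟`, obtained as the intersection of all σ-subalgebras with this
invariance property. -/
def sigmaQ [mQ : MeasurableSpace Q] [mΔ : MeasurableSpace Δ] (T : Kernel Q (Q × Δ)) :
    MeasurableSpace Q :=
  sInf {𝒜 | @IsSufficientAlgebra Q Δ mQ mΔ T 𝒜}

/-- **Theorem 4.1 (Internal-Event Reduction), existence part.** There exists a smallest
σ-subalgebra `σ_Q(T)` of `𝒬` such that for all `C ∈ σ_Q(T) ⊗ 𝒟` the function
`T(·,C)` is `σ_Q(T)`-measurable: the intersection `sigmaQ T` of all σ-subalgebras with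
this property itself has the property and is a lower bound for all of them. -/
theorem sigmaQ_isSufficient_and_smallest [mQ : MeasurableSpace Q] [mΔ : MeasurableSpace Δ]
    (T : Kernel Q (Q × Δ)) [IsMarkovKernel T] :
    IsSufficientAlgebra T (sigmaQ T) ∧
      ∀ 𝒜 : MeasurableSpace Q, @IsSufficientAlgebra Q Δ mQ mΔ T 𝒜 → @sigmaQ Q Δ mQ mΔ T ≤ 𝒜 := by
  have hle : ∀ 𝒜 : MeasurableSpace Q, @IsSufficientAlgebra Q Δ mQ mΔ T 𝒜 →
      @sigmaQ Q Δ mQ mΔ T ≤ 𝒜 := fun 𝒜 h => sInf_le h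
  have hQ : @IsSufficientAlgebra Q Δ mQ mΔ T mQ :=
    ⟨le_refl _, fun C hC => T.measurable_coe hC⟩
  refine ⟨⟨hle mQ hQ, fun C hC s hs => ?_⟩, hle⟩
  refine MeasurableSpace.measurableSet_sInf.2 fun 𝒜 h𝒜 => ?_
  refine h𝒜.2 C ?_ hs
  exact (sup_le_sup (MeasurableSpace.comap_mono (hle 𝒜 h𝒜)) le_rfl :
    (@sigmaQ Q Δ mQ mΔ T).prod mΔ ≤ 𝒜.prod mΔ) C hC

end HiddenSources
end

section
/- Let (Q,𝒬) and (Δ,𝒟) be measurable spaces, and let f: Q → Q and g: Q → Δ be measurable maps. Consider the generator [(Q,𝒬),T,(Δ,𝒟)] defined by T(x, A×B) := 1 if f(x) ∈ A and g(f(x)) ∈ B, and 0 otherwise. Then σ_Q(T) = σ(g∘f, g∘f², g∘f³, …), the σ-algebra generated by the maps g∘fᵏ: Q → Δ for k = 1,2,3,…. -/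
open MeasureTheory ProbabilityTheory
open scoped ENNReal Classical

namespace HiddenSources

variable {Q Δ : Type*}

/-- **Theorem 4.2.** For the deterministic generator `T(x, A × B) = 1` if `f(x) ∈ A` and
`g(f(x)) ∈ B`, else `0`, one has `σ_Q(T) = σ(g∘f, g∘f², g∘f³, …)`, the σ-algebra
generated by the maps `g ∘ fᵏ`, `k ≥ 1`. -/
theorem sigmaQ_deterministic [mQ : MeasurableSpace Q] [mΔ : MeasurableSpace Δ]
    (f : Q → Q) (g : Q → Δ) (hf : Measurable f) (hg : Measurable g)
    (T : Kernel Q (Q × Δ)) [IsMarkovKernel T]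
    (hT : ∀ (x : Q) (A : Set Q) (B : Set Δ), MeasurableSet A → MeasurableSet B →
      T x (A ×ˢ B) = if f x ∈ A ∧ g (f x) ∈ B then 1 else 0) :
    sigmaQ T = ⨆ k : ℕ, mΔ.comap fun x => g (f^[k + 1] x) := by
  have hgf : Measurable fun x => (f x, g (f x)) := hf.prodMk (hg.comp hf)
  have hTd : ∀ x, T x = Measure.dirac (f x, g (f x)) := by
    intro x
    refine Measure.ext_prod (fun {A B} hA hB => ?_)
    rw [hT x A B hA hB, Measure.dirac_apply' _ (hA.prod hB)]
    simp [Set.indicator_apply, Set.mem_prod]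
  -- measurability of a set from measurability of its 0-1 indicator
  have key : ∀ (m : MeasurableSpace Q) (p : Q → Prop),
      Measurable[m] (fun x => if p x then (1 : ℝ≥0∞) else 0) → MeasurableSet[m] {x | p x} := by
    intro m p h
    have h1 := h (measurableSet_singleton (1 : ℝ≥0∞))
    convert h1 using 1
    ext x
    by_cases hx : p x <;> simp [hx]
  apply le_antisymm
  · refine sInf_le ⟨?_, ?_⟩
    · refine iSup_le fun k => ?_
      exact (hg.comp (hf.iterate (k + 1))).comap_le
    · intro C hC
      set m : MeasurableSpace Q := ⨆ k : ℕ, mΔ.comap fun x => g (f^[k + 1] x) with hm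
      have hle : m ≤ mQ := iSup_le fun k => (hg.comp (hf.iterate (k + 1))).comap_le
      have hk : ∀ k : ℕ, Measurable[m] fun x => g (f^[k + 1] x) := fun k =>
        Measurable.of_comap_le (le_iSup (fun k : ℕ => mΔ.comap fun x => g (f^[k + 1] x)) k)
      have hfm : Measurable[m, m] f := by
        apply Measurable.of_comap_le
        conv_lhs => rw [hm, MeasurableSpace.comap_iSup]
        refine iSup_le fun k => ?_
        rw [MeasurableSpace.comap_comp]
        exact (hk (k + 1)).comap_le
      have hpair : @Measurable _ _ m (m.prod mΔ) fun x => (f x, g (f x)) :=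
        by
        exact Measurable.prodMk hfm (hk 0)
      have hC' : MeasurableSet[mQ.prod mΔ] C :=
        (sup_le_sup (MeasurableSpace.comap_mono hle) le_rfl : m.prod mΔ ≤ mQ.prod mΔ) C hC
      have he : (fun x => T x C) =
          ((fun x => (f x, g (f x))) ⁻¹' C).indicator (fun _ => (1 : ℝ≥0∞)) := by
        funext x
        rw [hTd x, @Measure.dirac_apply' _ (mQ.prod mΔ) _ _ hC']
        rfl
      rw [he]
      exact (@measurable_const _ _ _ m _).indicator (hpair hC)
  · refine le_sInf fun m hm => ?_
    obtain ⟨hle, hs⟩ := hm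
    have hbox : ∀ (A : Set Q) (B : Set Δ), MeasurableSet[m] A → MeasurableSet B →
        MeasurableSet[m] {x | f x ∈ A ∧ g (f x) ∈ B} := by
      intro A B hA hB
      apply key
      have h := hs (A ×ˢ B) (@MeasurableSet.prod _ _ m mΔ _ _ hA hB)
      convert h using 2 with x
      rw [hT x A B (hle _ hA) hB]
      congr
    have hfm : Measurable[m, m] f := by
      intro A hA
      have h := hbox A Set.univ hA MeasurableSet.univ
      simp only [Set.mem_univ, and_true] at h
      exact h
    have hgm : Measurable[m] fun x => g (f x) := by
      intro B hB
      have h := hbox Set.univ B (@MeasurableSet.univ _ m) hB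
      simp only [Set.mem_univ, true_and] at h
      exact h
    refine iSup_le fun k => ?_
    have : Measurable[m] fun x => g (f^[k + 1] x) := by
      induction k with
      | zero => exact hgm
      | succ k ih => exact ih.comp hfm
    exact this.comap_le

end HiddenSources
end

section
/- Let (Q,𝒬) and (Δ,𝒟) be measurable spaces, f: Q → Q and g: Q → Δ measurable maps, and T the deterministic generator T(x, A×B) := 1 if f(x) ∈ A and g(f(x)) ∈ B, else 0. Then for every C ∈ σ(g∘f, g∘f², …)⊗𝒟, the function x ↦ T(x,C) is measurable with respect to σ(g∘f, g∘f², …); consequently σ_Q(T) ⊆ σ(g∘f, g∘f², …). -/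
open MeasureTheory ProbabilityTheory
open scoped ENNReal Classical

namespace HiddenSources

variable {Q Δ : Type*}

/-- **Theorem 4.2, first inclusion.** For the deterministic generator
`T(x, A × B) = 1` if `f(x) ∈ A` and `g(f(x)) ∈ B`, else `0`: for every
`C ∈ σ(g∘f, g∘f², …) ⊗ 𝒟`, the function `T(·,C)` is `σ(g∘f, g∘f², …)`-measurable;
consequently `σ_Q(T) ⊆ σ(g∘f, g∘f², …)`. -/
theorem sigmaQ_deterministic_le [mQ : MeasurableSpace Q] [mΔ : MeasurableSpace Δ]
    (f : Q → Q) (g : Q → Δ) (hf : Measurable f) (hg : Measurable g)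
    (T : Kernel Q (Q × Δ)) [IsMarkovKernel T]
    (hT : ∀ (x : Q) (A : Set Q) (B : Set Δ), MeasurableSet A → MeasurableSet B →
      T x (A ×ˢ B) = if f x ∈ A ∧ g (f x) ∈ B then 1 else 0) :
    (∀ C : Set (Q × Δ),
        MeasurableSet[(⨆ k : ℕ, mΔ.comap fun x => g (f^[k + 1] x)).prod mΔ] C →
        Measurable[⨆ k : ℕ, mΔ.comap fun x => g (f^[k + 1] x)] fun x => T x C) ∧
      sigmaQ T ≤ ⨆ k : ℕ, mΔ.comap fun x => g (f^[k + 1] x) := by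
  have hTd : ∀ x, T x = Measure.dirac (f x, g (f x)) := by
    intro x
    refine Measure.ext_prod (fun {A B} hA hB => ?_)
    rw [hT x A B hA hB, Measure.dirac_apply' _ (hA.prod hB)]
    simp [Set.indicator_apply, Set.mem_prod]
  have hTC : ∀ x (C : Set (Q × Δ)), MeasurableSet C →
      T x C = if (f x, g (f x)) ∈ C then 1 else 0 := by
    intro x C hC
    rw [hTd x, Measure.dirac_apply' _ hC]
    simp [Set.indicator_apply]
  have hle : (⨆ k : ℕ, mΔ.comap fun x => g (f^[k + 1] x)) ≤ mQ := by
    refine iSup_le fun k => ?_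
    exact (hg.comp (hf.iterate (k + 1))).comap_le
  have key : ∀ C : Set (Q × Δ),
        MeasurableSet[(⨆ k : ℕ, mΔ.comap fun x => g (f^[k + 1] x)).prod mΔ] C →
        Measurable[⨆ k : ℕ, mΔ.comap fun x => g (f^[k + 1] x)] fun x => T x C := by
    generalize hS : (⨆ k : ℕ, mΔ.comap fun x => g (f^[k + 1] x)) = S at hle
    intro C hC
    have hSk : ∀ k : ℕ, Measurable[S, mΔ] fun x => g (f^[k + 1] x) := by
      intro k
      rw [measurable_iff_comap_le, ← hS]
      exact le_iSup (fun k : ℕ => mΔ.comap fun x => g (f^[k + 1] x)) k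
    have hfS : Measurable[S, S] f := by
      rw [measurable_iff_comap_le]
      conv_lhs => rw [← hS]
      rw [MeasurableSpace.comap_iSup]
      refine iSup_le fun k => ?_
      rw [MeasurableSpace.comap_comp]
      exact measurable_iff_comap_le.1 (hSk (k + 1))
    have hpair : Measurable[S, S.prod mΔ] fun x => (f x, g (f x)) :=
      Measurable.prodMk (m := S) hfS (hSk 0)
    have hCm : MeasurableSet[mQ.prod mΔ] C := by
      have : S.prod mΔ ≤ mQ.prod mΔ :=
        sup_le_sup (MeasurableSpace.comap_mono hle) le_rfl
      exact this C hC
    have hpre : MeasurableSet[S] ((fun x => (f x, g (f x))) ⁻¹' C) := hpair hC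
    have heq : (fun x => T x C) =
        Set.indicator ((fun x => (f x, g (f x))) ⁻¹' C) (fun _ => (1 : ℝ≥0∞)) := by
      funext x
      rw [hTC x C hCm]
      simp [Set.indicator_apply]
    rw [heq]
    exact Measurable.indicator (m := S) measurable_const hpre
  exact ⟨key, sInf_le ⟨hle, key⟩⟩

end HiddenSources
end

section
/- Let (Q,𝒬) and (Δ,𝒟) be measurable spaces, f: Q → Q and g: Q → Δ measurable maps, and T the deterministic generator T(x, A×B) := 1 if f(x) ∈ A and g(f(x)) ∈ B, else 0. Then for every k ≥ 1, the σ-algebra σ(g∘fᵏ) generated by the single map g∘fᵏ is contained in σ_Q(T); consequently σ(g∘f, g∘f², …) ⊆ σ_Q(T). -/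
open MeasureTheory ProbabilityTheory
open scoped ENNReal Classical

namespace HiddenSources

variable {Q Δ : Type*}

/-- **Theorem 4.2, second inclusion.** For the deterministic generator
`T(x, A × B) = 1` if `f(x) ∈ A` and `g(f(x)) ∈ B`, else `0`: for every `k ≥ 1` the
σ-algebra `σ(g∘fᵏ)` is contained in `σ_Q(T)`; consequently
`σ(g∘f, g∘f², …) ⊆ σ_Q(T)`. -/
theorem le_sigmaQ_deterministic [mQ : MeasurableSpace Q] [mΔ : MeasurableSpace Δ]
    (f : Q → Q) (g : Q → Δ) (hf : Measurable f) (hg : Measurable g)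
    (T : Kernel Q (Q × Δ)) [IsMarkovKernel T]
    (hT : ∀ (x : Q) (A : Set Q) (B : Set Δ), MeasurableSet A → MeasurableSet B →
      T x (A ×ˢ B) = if f x ∈ A ∧ g (f x) ∈ B then 1 else 0) :
    (∀ k : ℕ, 1 ≤ k → (mΔ.comap fun x => g (f^[k] x)) ≤ sigmaQ T) ∧
      (⨆ k : ℕ, mΔ.comap fun x => g (f^[k + 1] x)) ≤ sigmaQ T := by
  have key : ∀ 𝒜 : MeasurableSpace Q, @IsSufficientAlgebra Q Δ mQ mΔ T 𝒜 →
      ∀ (A : Set Q) (B : Set Δ), MeasurableSet[𝒜] A → MeasurableSet B →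
        MeasurableSet[𝒜] {x | f x ∈ A ∧ g (f x) ∈ B} := by
    intro 𝒜 h𝒜 A B hA hB
    have h1 := h𝒜.2 (A ×ˢ B) (@MeasurableSet.prod Q Δ 𝒜 mΔ A B hA hB)
    have h2 := h1 (measurableSet_singleton (1 : ℝ≥0∞))
    have h3 : (fun x => T x (A ×ˢ B)) ⁻¹' {1} = {x | f x ∈ A ∧ g (f x) ∈ B} := by
      ext x
      simp only [Set.mem_preimage, Set.mem_singleton_iff, Set.mem_ofPred_eq]
      rw [hT x A B (h𝒜.1 A hA) hB]
      split_ifs with h <;> simp [h]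
    rwa [h3] at h2
  have main : ∀ k : ℕ, (mΔ.comap fun x => g (f^[k + 1] x)) ≤ sigmaQ T := by
    intro k
    refine le_sInf fun 𝒜 h𝒜 => ?_
    rintro _ ⟨B, hB, rfl⟩
    induction k with
    | zero =>
      have := key 𝒜 h𝒜 Set.univ B (@MeasurableSet.univ Q 𝒜) hB
      convert this using 1
      ext x
      simp
    | succ k ih =>
      have := key 𝒜 h𝒜 _ Set.univ ih MeasurableSet.univ
      convert this using 1
      ext x
      simp
  refine ⟨fun k hk => ?_, iSup_le main⟩
  obtain ⟨n, rfl⟩ := Nat.exists_eq_add_of_le' hk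
  exact main n

end HiddenSources
end

section
/- Let K = {x ∈ ℂ : |x| = 1} be the unit circle with its Borel σ-algebra, A₁ = {e^{iφ} : φ ∈ [0,π)} its upper half and A₂ = {e^{iφ} : φ ∈ [π,2π)} its lower half. Fix a ∈ K which is not a root of unity, let f(x) = a·x and g(x) = k for x ∈ A_k (k = 1,2), and let T be the deterministic generator T(x, A×B) := 1 if f(x) ∈ A and g(f(x)) ∈ B, else 0, with output space {1,2}. Then σ_Q(T) equals the full Borel σ-algebra of the unit circle K. -/
open MeasureTheory ProbabilityTheory
open scoped ENNReal Classical

namespace HiddenSources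

variable {Q Δ : Type*}

noncomputable instance : MeasurableSpace Circle := borel Circle

/-- The measurement map of the circle-rotation example: `g(x) = 1` on the upper half
`A₁ = {e^{iφ} : φ ∈ [0,π)}` and `g(x) = 2` on the lower half
`A₂ = {e^{iφ} : φ ∈ [π,2π)}`. -/
noncomputable def circleObs (x : Circle) : ℕ :=
  if 0 ≤ Complex.arg (x : ℂ) ∧ Complex.arg (x : ℂ) < Real.pi then 1 else 2

theorem denseRange_pow_circle (a : Circle) (ha : ∀ p : ℕ, p ≠ 0 → a ^ p ≠ 1) :
    DenseRange (fun n : ℕ => a ^ n) := by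
  rw [← denseRange_zpow_iff_pow]
  haveI : Fact ((0 : ℝ) < 1) := ⟨one_pos⟩
  let e := AddCircle.homeomorphCircle (T := (1 : ℝ)) one_ne_zero
  obtain ⟨t, ht⟩ := e.surjective a
  have hta : AddCircle.toCircle t = a := by
    rw [← ht]; exact (AddCircle.homeomorphCircle_apply _ _).symm
  have h0 : addOrderOf t = 0 := by
    rw [addOrderOf_eq_zero_iff']
    intro n hn h
    apply ha n hn.ne'
    rw [← hta, ← AddCircle.toCircle_nsmul, h, AddCircle.toCircle_zero]
  have hd := AddCircle.denseRange_zsmul_iff.2 h0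
  have := e.surjective.denseRange.comp hd e.continuous
  convert this using 1
  ext n
  simp only [Function.comp, e, AddCircle.homeomorphCircle_apply, AddCircle.toCircle_zsmul, hta]

theorem circleObs_of_im_pos (x : Circle) (h : 0 < (x : ℂ).im) : circleObs x = 1 := by
  unfold circleObs
  rw [if_pos]
  exact ⟨Complex.arg_nonneg_iff.2 h.le, Complex.arg_lt_pi_iff.2 (Or.inr h.ne')⟩

theorem circleObs_of_im_neg (x : Circle) (h : (x : ℂ).im < 0) : circleObs x ≠ 1 := by
  unfold circleObs
  rw [if_neg]
  · simp
  · rintro ⟨h1, -⟩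
    exact absurd (Complex.arg_nonneg_iff.1 h1) (not_le.2 h)

theorem exists_separating (x y : Circle) (hxy : x ≠ y) :
    ∃ z : Circle, 0 < ((z * x : Circle) : ℂ).im ∧ ((z * y : Circle) : ℂ).im < 0 := by
  have hne : (x : ℂ) - y ≠ 0 := fun h => hxy (Circle.ext (sub_eq_zero.1 h))
  have hr : 0 < ‖(x : ℂ) - y‖ := norm_pos_iff.2 hne
  let w : ℂ := ((‖(x : ℂ) - y‖⁻¹ : ℝ) : ℂ) * (Complex.I * (starRingEnd ℂ) ((x : ℂ) - y))
  have hw : ‖w‖ = 1 := by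
    simp only [w, norm_mul, Complex.norm_real, Complex.norm_I, RCLike.norm_conj, norm_inv, norm_norm]
    field_simp
  have hx1 : (x : ℂ).re ^ 2 + (x : ℂ).im ^ 2 = 1 := by
    have := Circle.normSq_coe x
    rw [Complex.normSq_apply] at this; linarith
  have hy1 : (y : ℂ).re ^ 2 + (y : ℂ).im ^ 2 = 1 := by
    have := Circle.normSq_coe y
    rw [Complex.normSq_apply] at this; linarith
  have hpos : 0 < ((x : ℂ).re - (y : ℂ).re) ^ 2 + ((x : ℂ).im - (y : ℂ).im) ^ 2 := by
    have := Complex.normSq_pos.2 hne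
    rw [Complex.normSq_apply, Complex.sub_re, Complex.sub_im] at this; linarith
  have hi : 0 < ‖(x : ℂ) - y‖⁻¹ := inv_pos.2 hr
  refine ⟨⟨w, mem_sphere_zero_iff_norm.2 hw⟩, ?_, ?_⟩
  · have : ((⟨w, mem_sphere_zero_iff_norm.2 hw⟩ * x : Circle) : ℂ) = w * x := rfl
    rw [this]
    have : (w * x).im = ‖(x : ℂ) - y‖⁻¹ *
        (1 - ((x : ℂ).re * (y : ℂ).re + (x : ℂ).im * (y : ℂ).im)) := by
      rw [← hx1]
      simp only [w, mul_assoc, Complex.im_ofReal_mul]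
      congr 1
      simp
      ring
    rw [this]
    apply mul_pos hi
    nlinarith
  · have : ((⟨w, mem_sphere_zero_iff_norm.2 hw⟩ * y : Circle) : ℂ) = w * y := rfl
    rw [this]
    have : (w * y).im = ‖(x : ℂ) - y‖⁻¹ *
        (((x : ℂ).re * (y : ℂ).re + (x : ℂ).im * (y : ℂ).im) - 1) := by
      rw [← hy1]
      simp only [w, mul_assoc, Complex.im_ofReal_mul]
      congr 1
      simp
      ring
    rw [this]
    apply mul_neg_of_pos_of_neg hi
    nlinarith

theorem exists_pow_separating (a : Circle) (ha : ∀ p : ℕ, p ≠ 0 → a ^ p ≠ 1)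
    (x y : Circle) (hxy : x ≠ y) :
    ∃ n : ℕ, circleObs (a ^ (n + 1) * x) = 1 ∧ circleObs (a ^ (n + 1) * y) ≠ 1 := by
  obtain ⟨z, hz1, hz2⟩ := exists_separating (a * x) (a * y) (fun h => hxy (mul_left_cancel h))
  have ho : IsOpen {z : Circle | 0 < ((z * (a * x) : Circle) : ℂ).im ∧
      ((z * (a * y) : Circle) : ℂ).im < 0} := by
    apply IsOpen.and
    · exact isOpen_lt continuous_const (Complex.continuous_im.comp
        ((Continuous.comp (g := fun z : Circle => (z : ℂ)) (by fun_prop) (continuous_id.mul continuous_const))))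
    · exact isOpen_lt (Complex.continuous_im.comp
        ((Continuous.comp (g := fun z : Circle => (z : ℂ)) (by fun_prop) (continuous_id.mul continuous_const)))) continuous_const
  obtain ⟨n, hn1, hn2⟩ := (denseRange_pow_circle a ha).exists_mem_open ho ⟨z, hz1, hz2⟩
  refine ⟨n, ?_, ?_⟩
  · rw [pow_succ, mul_assoc]; exact circleObs_of_im_pos _ hn1
  · rw [pow_succ, mul_assoc]; exact circleObs_of_im_neg _ hn2

theorem measurableSet_of_injective (F : Circle → ℕ → Prop) (hF : Measurable F)
    (hinj : Function.Injective F) (s : Set Circle) (hs : MeasurableSet s) :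
    MeasurableSet (Set.image F s) := by
  have : BorelSpace Circle := ⟨rfl⟩
  have : PolishSpace Circle := inferInstance
  exact (hF.measurableEmbedding hinj).measurableSet_image.2 hs

theorem borel_le_of_injective (𝒜 : MeasurableSpace Circle) (hle : 𝒜 ≤ borel Circle)
    (F : Circle → ℕ → Prop) (hF : Measurable[𝒜] F) (hinj : Function.Injective F) :
    borel Circle ≤ 𝒜 := by
  intro s hs
  have h1 := hF (measurableSet_of_injective F (hF.mono hle le_rfl) hinj s hs)
  rwa [Set.preimage_image_eq _ hinj] at h1

/-- **Example 4.3.2(b) (Rotation of the unit circle, irrational rotation).** Let `a` be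
an element of the unit circle that is not a root of unity, `f(x) = a·x`, and `g` the
upper/lower-half measurement. For the deterministic generator `T(x, A × B) = 1` if
`f(x) ∈ A` and `g(f(x)) ∈ B`, else `0`, the reduced σ-algebra `σ_Q(T)` is the full
Borel σ-algebra of the unit circle. -/
theorem circle_rotation_not_root_of_unity (a : Circle)
    (ha : ∀ p : ℕ, p ≠ 0 → a ^ p ≠ 1)
    (T : Kernel Circle (Circle × ℕ)) [IsMarkovKernel T]
    (hT : ∀ (x : Circle) (A : Set Circle) (B : Set ℕ), MeasurableSet A → MeasurableSet B →
      T x (A ×ˢ B) = if a * x ∈ A ∧ circleObs (a * x) ∈ B then 1 else 0) :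
    sigmaQ T = borel Circle := by
  apply le_antisymm
  · exact sInf_le ⟨le_rfl, fun C hC => T.measurable_coe hC⟩
  · refine le_sInf ?_
    rintro 𝒜 ⟨hle, h𝒜⟩
    have key : ∀ (A : Set Circle) (B : Set ℕ), MeasurableSet[𝒜] A →
        MeasurableSet[𝒜] {x | a * x ∈ A ∧ circleObs (a * x) ∈ B} := by
      intro A B hA
      have hm := h𝒜 (A ×ˢ B) (@MeasurableSet.prod _ _ 𝒜 _ A B hA (MeasurableSet.of_discrete))
      have h1 := hm (measurableSet_singleton (1 : ℝ≥0∞))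
      convert h1 using 1
      ext x
      simp only [Set.mem_ofPred_eq, Set.mem_preimage, Set.mem_singleton_iff]
      rw [hT x A B (hle _ hA) MeasurableSet.of_discrete]
      split_ifs with h <;> simp [h]
    have hn : ∀ n : ℕ, MeasurableSet[𝒜] {x | circleObs (a ^ (n + 1) * x) = 1} := by
      intro n
      induction n with
      | zero =>
        have := key Set.univ {1} (@MeasurableSet.univ _ 𝒜)
        simpa using this
      | succ n ih =>
        have := key _ Set.univ ih
        simpa [pow_succ, mul_assoc] using this
    let F : Circle → ℕ → Prop := fun x n => circleObs (a ^ (n + 1) * x) = 1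
    have hF : Measurable[𝒜] F := by
      refine @measurable_pi_lambda _ _ _ 𝒜 _ F fun n => ?_
      exact (@measurableSet_setOfPred _ 𝒜 _).1 (hn n)
    have hinj : Function.Injective F := by
      intro x y hxy
      by_contra hne
      obtain ⟨n, h1, h2⟩ := exists_pow_separating a ha x y hne
      exact h2 ((congrFun hxy n).mp h1)
    exact borel_le_of_injective 𝒜 hle F hF hinj

end HiddenSources
end
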